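/- Let (R, m) be a Noetherian local ring, M a finitely generated R-module of Krull dimension t ≥ 1, and Q a parameter ideal of M such that m M = Q M. Then for all sufficiently large n, ℓ_R((Q^{n+1}M :_M m)/Q^{n+1}M) = ℓ_R(Q^n M/Q^{n+1}M) + ℓ_R(0 :_M m); in particular, if t ≥ 2 then the irreducible multiplicity f⁰_Q(M) equals the Hilbert multiplicity e⁰_Q(M). -/

import Mathlib

open IsLocalRing Submodule

/-- The colon submodule `(N :_M J) = {x ∈ M ∣ J x ⊆ N}`. -/
def Submodule.colonBy {R M : Type*} [CommRing R] [AddCommGroup M] [Module R M]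
    (N : Submodule R M) (J : Ideal R) : Submodule R M where
  carrier := {x | ∀ r ∈ J, r • x ∈ N}
  add_mem' := fun {a b} ha hb r hr => by
    rw [smul_add]; exact N.add_mem (ha r hr) (hb r hr)
  zero_mem' := fun r hr => by rw [smul_zero]; exact N.zero_mem
  smul_mem' := fun c {x} hx r hr => by
    rw [smul_comm]; exact N.smul_mem c (hx r hr)

/-- The length of a module: the height of `⊤` in its lattice of submodules. -/
noncomputable def moduleLength (R M : Type*) [Ring R] [AddCommGroup M] [Module R M] : ℕ∞ :=
  Order.height (⊤ : Submodule R M)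

/-- The minimal number of generators of a module. -/
noncomputable def muGen (R M : Type*) [Ring R] [AddCommGroup M] [Module R M] : ℕ :=
  sInf {n | ∃ s : Finset M, s.card = n ∧ Submodule.span R (s : Set M) = ⊤}

/-- The depth of a module over a local ring: the supremum of lengths of `M`-regular
sequences consisting of elements of the maximal ideal. -/
noncomputable def depthM (R M : Type*) [CommRing R] [IsLocalRing R]
    [AddCommGroup M] [Module R M] : ℕ :=
  sSup {n | ∃ rs : List R, rs.length = n ∧ (∀ r ∈ rs, r ∈ maximalIdeal R) ∧
    RingTheory.Sequence.IsRegular M rs}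

/-- `Q` is a parameter ideal of `M` (of dimension `t`): it is generated by `t` elements of
the maximal ideal and `M/QM` has finite length. -/
def IsParameterIdeal (R M : Type*) [CommRing R] [IsLocalRing R]
    [AddCommGroup M] [Module R M] (t : ℕ) (Q : Ideal R) : Prop :=
  Q ≤ maximalIdeal R ∧ ∃ s : Finset R, s.card = t ∧ Q = Ideal.span (s : Set R) ∧
    moduleLength R (M ⧸ (Q • ⊤ : Submodule R M)) ≠ ⊤

/-!
Write `I = 𝔪`; as `I M = Q M`, the filtrations `Iⁿ M` and `Qⁿ M` coincide. The Artin–Rees lemma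
for the map `M → Mˢ` given by generators of `I` shows `(Iⁿ⁺¹M : I) ≤ Iⁿ⁻ᶜ M + (0 : I)` for some
`c`. The submodules `Iⁿ⁻ᶜ M ∩ (Iⁿ⁺¹M : I)` form an `I`-filtration inside a stable one, so they are
themselves stable, and hence eventually contained in `I (IⁿM : I) ≤ Iⁿ M`. By the modular law
`(Iⁿ⁺¹M : I) = Iⁿ M + (0 : I)` for large `n`. The sum is direct for large `n`, again by Artin–Rees,
which gives the length formula. Its first term is the first difference of `n ↦ ℓ(M / Qⁿ⁺¹M)`, and
differencing a polynomial preserves (degree)! · (leading coefficient).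
-/

open Filter (atTop eventually_atTop eventually_ge_atTop tendsto_add_atTop_nat)

section Length

variable {R M N : Type*} [Ring R] [AddCommGroup M] [Module R M] [AddCommGroup N] [Module R N]

theorem moduleLength_eq_length (R M : Type*) [Ring R] [AddCommGroup M] [Module R M] :
    moduleLength R M = Module.length R M :=
  (Module.length_eq_height R M).symm

theorem length_eq_length_inf_ker_add_length_map (p : Submodule R M) (f : M →ₗ[R] N) :
    Module.length R p = Module.length R ↥(p ⊓ LinearMap.ker f) + Module.length R (p.map f) := by
  refine Module.length_eq_add_of_exact (inclusion inf_le_left) (f.submoduleMap p)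
    (inclusion_injective _) (f.submoduleMap_surjective p) (LinearMap.exact_iff.mpr ?_)
  rw [LinearMap.ker_submoduleMap, range_inclusion, comap_inf, comap_subtype_self, top_inf_eq]

theorem length_map_mkQ_eq_add {A B C : Submodule R M} (hBA : B ≤ A) (hAC : A ≤ C) :
    Module.length R (C.map B.mkQ) =
      Module.length R (A.map B.mkQ) + Module.length R (C.map A.mkQ) := by
  have inf_ker_factor : C.map B.mkQ ⊓ LinearMap.ker (factor hBA) = A.map B.mkQ := by
    rw [ker_mapQ, comap_id, inf_eq_right]
    exact map_mono hAC
  rw [length_eq_length_inf_ker_add_length_map _ (factor hBA), inf_ker_factor, ← map_comp,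
    factor_comp_mk]

theorem length_quotient_eq_add {A B : Submodule R M} (hBA : B ≤ A) :
    Module.length R (M ⧸ B) = Module.length R (A.map B.mkQ) + Module.length R (M ⧸ A) := by
  have length_map_top (N : Submodule R M) :
      Module.length R ((⊤ : Submodule R M).map N.mkQ) = Module.length R (M ⧸ N) := by
    rw [Submodule.map_top, range_mkQ, Module.length_top]
  rw [← length_map_top B, ← length_map_top A, length_map_mkQ_eq_add hBA le_top]

theorem length_map_mkQ_sup_of_disjoint {A B S : Submodule R M} (hBA : B ≤ A) (hAS : Disjoint A S) :
    Module.length R ((A ⊔ S).map B.mkQ) =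
      Module.length R (A.map B.mkQ) + Module.length R S := by
  have map_sup_eq : (A ⊔ S).map A.mkQ = S.map A.mkQ := by
    rw [Submodule.map_sup, mkQ_map_self, bot_sup_eq]
  have length_map_eq : Module.length R S = Module.length R (S.map A.mkQ) := by
    rw [length_eq_length_inf_ker_add_length_map S A.mkQ, ker_mkQ, hAS.symm.eq_bot,
      Module.length_bot, zero_add]
  rw [length_map_mkQ_eq_add hBA le_sup_left, map_sup_eq, length_map_eq]

end Length

section Colon

variable {R M : Type*} [CommRing R] [AddCommGroup M] [Module R M]

theorem le_colonBy_iff_smul_le {I : Ideal R} {P N : Submodule R M} :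
    P ≤ N.colonBy I ↔ I • P ≤ N :=
  ⟨fun h => smul_le.mpr fun r hr _ hx => h hx r hr,
    fun h _ hx _ hr => h (smul_mem_smul hr hx)⟩

theorem smul_colonBy_le (I : Ideal R) (N : Submodule R M) : I • N.colonBy I ≤ N :=
  le_colonBy_iff_smul_le.mp le_rfl

theorem colonBy_mono {N N' : Submodule R M} (h : N ≤ N') (I : Ideal R) :
    N.colonBy I ≤ N'.colonBy I :=
  fun _ hx r hr => h (hx r hr)

theorem mem_colonBy_span_iff {s : Set R} {N : Submodule R M} {x : M} :
    x ∈ N.colonBy (Ideal.span s) ↔ ∀ r ∈ s, r • x ∈ N :=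
  show Ideal.span s ≤ N.comap (LinearMap.toSpanSingleton R M x) ↔ _ from span_le

theorem mem_smul_top_pi_iff {ι : Type*} [Finite ι] {J : Ideal R} {f : ι → M} :
    f ∈ (J • ⊤ : Submodule R (ι → M)) ↔ ∀ i, f i ∈ (J • ⊤ : Submodule R M) := by
  classical
  have := Fintype.ofFinite ι
  refine ⟨fun hf i => ?_, fun hf => ?_⟩
  · have hfi := mem_map_of_mem (f := LinearMap.proj i) hf
    rw [map_smul''] at hfi
    exact smul_mono le_rfl le_top hfi
  · rw [← Finset.univ_sum_single f]
    refine sum_mem fun i _ => ?_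
    have hfi := mem_map_of_mem (f := LinearMap.single R (fun _ : ι => M) i) (hf i)
    rw [map_smul''] at hfi
    exact smul_mono le_rfl le_top hfi

theorem comap_pi_lsmul_smul_top (s : Finset R) (J : Ideal R) :
    (J • ⊤ : Submodule R (s → M)).comap (LinearMap.pi fun r : s => LinearMap.lsmul R M r) =
      (J • ⊤ : Submodule R M).colonBy (Ideal.span s) := by
  ext x
  simp [mem_smul_top_pi_iff, mem_colonBy_span_iff]

theorem ker_pi_lsmul (s : Finset R) :
    LinearMap.ker (LinearMap.pi fun r : s => LinearMap.lsmul R M r) =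
      (⊥ : Submodule R M).colonBy (Ideal.span s) := by
  simpa using comap_pi_lsmul_smul_top (M := M) s ⊥

theorem pow_smul_top_congr {I Q : Ideal R} (h : I • (⊤ : Submodule R M) = Q • ⊤) (n : ℕ) :
    (I ^ n • ⊤ : Submodule R M) = Q ^ n • ⊤ := by
  induction n with
  | zero => simp
  | succ n ih => rw [pow_succ, mul_smul, h, ← mul_smul, mul_comm, mul_smul, ih, ← mul_smul,
      ← pow_succ']

theorem pow_smul_top_le_colonBy (I : Ideal R) (n : ℕ) :
    (I ^ n • ⊤ : Submodule R M) ≤ (I ^ (n + 1) • ⊤ : Submodule R M).colonBy I := by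
  rw [le_colonBy_iff_smul_le, ← mul_smul, pow_succ']

end Colon

section ArtinRees

variable {R M N : Type*} [CommRing R] [AddCommGroup M] [Module R M]
  [AddCommGroup N] [Module R N]

/-- The `I`-filtration `n ↦ (Iⁿ⁺¹M : I)` of `M`. It need not be stable, as every term contains
`(0 : I)`. -/
def colonFiltration (I : Ideal R) (M : Type*) [AddCommGroup M] [Module R M] : I.Filtration M where
  N n := (I ^ (n + 1) • ⊤ : Submodule R M).colonBy I
  mono n := colonBy_mono (pow_smul_top_le I M (n + 1).le_succ) I
  smul_le n := (smul_colonBy_le I _).trans (pow_smul_top_le_colonBy I (n + 1))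

/-- The `I`-adic filtration of `M` delayed by `c` steps: its `n`-th term is `M` for `n < c`. -/
def delayedFiltration (I : Ideal R) (M : Type*) [AddCommGroup M] [Module R M] (c : ℕ) :
    I.Filtration M where
  N n := I ^ (n - c) • ⊤
  mono n := pow_smul_top_le I M (by lia)
  smul_le n := by
    rw [← mul_smul, ← pow_succ']
    exact pow_smul_top_le I M (by lia)

theorem delayedFiltration_stable (I : Ideal R) (c : ℕ) : (delayedFiltration I M c).Stable :=
  ⟨c, fun n hn => by
    change I • I ^ (n - c) • (⊤ : Submodule R M) = I ^ (n + 1 - c) • ⊤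
    rw [← mul_smul, ← pow_succ', Nat.sub_add_comm hn]⟩

variable [IsNoetherianRing R]

theorem exists_comap_pow_smul_top_le [Module.Finite R N] (I : Ideal R) (f : M →ₗ[R] N) :
    ∃ c, ∀ n ≥ c, (I ^ n • ⊤ : Submodule R N).comap f ≤ I ^ (n - c) • ⊤ ⊔ LinearMap.ker f := by
  obtain ⟨c, artinRees⟩ := I.exists_pow_inf_eq_pow_smul (LinearMap.range f)
  refine ⟨c, fun n hn => ?_⟩
  rw [← comap_map_eq, ← map_le_iff_le_comap, map_comap_eq, inf_comm, artinRees n hn, map_smul'',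
    Submodule.map_top]
  exact smul_mono_right _ inf_le_right

variable [Module.Finite R M]

theorem eventually_pow_smul_top_inf_colonBy_le (I : Ideal R) (c : ℕ) :
    ∀ᶠ n in atTop,
      I ^ (n - c) • ⊤ ⊓ (I ^ (n + 1) • ⊤ : Submodule R M).colonBy I ≤ I ^ n • ⊤ := by
  obtain ⟨n₀, stable⟩ :=
    (delayedFiltration_stable (M := M) I c).inter_right (F' := colonFiltration I M)
  filter_upwards [eventually_ge_atTop (n₀ + 1)] with n hn
  obtain ⟨k, rfl⟩ := Nat.exists_eq_succ_of_ne_zero (by lia : n ≠ 0)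
  change (delayedFiltration I M c ⊓ colonFiltration I M).N (k + 1) ≤ _
  rw [← stable k (by lia)]
  exact (smul_mono_right I inf_le_right).trans (smul_colonBy_le I _)

theorem exists_colonBy_le_sup (I : Ideal R) :
    ∃ c, ∀ n ≥ c, (I ^ n • ⊤ : Submodule R M).colonBy I ≤
      I ^ (n - c) • ⊤ ⊔ (⊥ : Submodule R M).colonBy I := by
  obtain ⟨s, rfl⟩ : I.FG := IsNoetherian.noetherian I
  obtain ⟨c, hc⟩ := exists_comap_pow_smul_top_le (Ideal.span s)
    (LinearMap.pi fun r : s => LinearMap.lsmul R M r)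
  refine ⟨c, fun n hn => ?_⟩
  simpa only [comap_pi_lsmul_smul_top, ker_pi_lsmul] using hc n hn

theorem eventually_colonBy_pow_smul_top_eq_sup (I : Ideal R) :
    ∀ᶠ n in atTop, (I ^ (n + 1) • ⊤ : Submodule R M).colonBy I =
      I ^ n • ⊤ ⊔ (⊥ : Submodule R M).colonBy I := by
  obtain ⟨c, hc⟩ := exists_colonBy_le_sup (M := M) I
  filter_upwards [eventually_ge_atTop c, eventually_pow_smul_top_inf_colonBy_le (M := M) I c]
    with n hn inf_le
  have bot_colon_le : (⊥ : Submodule R M).colonBy I ≤ (I ^ (n + 1) • ⊤ : Submodule R M).colonBy I :=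
    colonBy_mono bot_le I
  have colon_le : (I ^ (n + 1) • ⊤ : Submodule R M).colonBy I ≤
      (⊥ : Submodule R M).colonBy I ⊔ I ^ (n - c) • ⊤ := by
    rw [sup_comm]
    exact (hc (n + 1) (by lia)).trans (sup_le_sup_right (pow_smul_top_le I M (by lia)) _)
  refine le_antisymm ?_ (sup_le (pow_smul_top_le_colonBy I n) bot_colon_le)
  calc (I ^ (n + 1) • ⊤ : Submodule R M).colonBy I
      = ((⊥ : Submodule R M).colonBy I ⊔ I ^ (n - c) • ⊤) ⊓
          (I ^ (n + 1) • ⊤ : Submodule R M).colonBy I := (inf_eq_right.mpr colon_le).symm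
    _ = (⊥ : Submodule R M).colonBy I ⊔
          I ^ (n - c) • ⊤ ⊓ (I ^ (n + 1) • ⊤ : Submodule R M).colonBy I :=
        sup_inf_assoc_of_le _ bot_colon_le
    _ ≤ (⊥ : Submodule R M).colonBy I ⊔ I ^ n • ⊤ := sup_le_sup_left inf_le _
    _ = I ^ n • ⊤ ⊔ (⊥ : Submodule R M).colonBy I := sup_comm _ _

theorem eventually_disjoint_pow_smul_top {I : Ideal R} {S : Submodule R M} (hS : I • S = ⊥) :
    ∀ᶠ n in atTop, Disjoint (I ^ n • ⊤ : Submodule R M) S := by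
  obtain ⟨c, artinRees⟩ := I.exists_pow_inf_eq_pow_smul S
  filter_upwards [eventually_ge_atTop (c + 1)] with n hn
  rw [disjoint_iff_inf_le, artinRees n (by lia)]
  calc I ^ (n - c) • (I ^ c • ⊤ ⊓ S) ≤ I • S :=
        smul_mono (Ideal.pow_le_self (by lia)) inf_le_right
    _ = ⊥ := hS

theorem eventually_length_colonBy_pow_smul_top {I Q : Ideal R}
    (hIQ : I • (⊤ : Submodule R M) = Q • ⊤) :
    ∀ᶠ n in atTop,
      Module.length R (((Q ^ (n + 1) • ⊤ : Submodule R M).colonBy I).map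
          (Q ^ (n + 1) • ⊤ : Submodule R M).mkQ) =
        Module.length R ((Q ^ n • ⊤ : Submodule R M).map (Q ^ (n + 1) • ⊤ : Submodule R M).mkQ) +
          Module.length R ((⊥ : Submodule R M).colonBy I) := by
  filter_upwards [eventually_colonBy_pow_smul_top_eq_sup (M := M) I,
    eventually_disjoint_pow_smul_top (le_bot_iff.mp (smul_colonBy_le I (⊥ : Submodule R M)))]
    with n colon_eq disjoint
  rw [pow_smul_top_congr hIQ, pow_smul_top_congr hIQ] at colon_eq
  rw [pow_smul_top_congr hIQ] at disjoint
  rw [colon_eq]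
  exact length_map_mkQ_sup_of_disjoint (pow_smul_top_le Q M n.le_succ) disjoint

end ArtinRees

section FirstDifference

open Polynomial

variable {K : Type*}

theorem coeff_taylor_sub_self [Ring K] {P : K[X]} {d : ℕ} (hP : P.natDegree ≤ d + 1) (r : K) :
    (taylor r P - P).coeff d = (d + 1) * P.coeff (d + 1) * r := by
  have natDegree_lt : (hasseDeriv d P).natDegree < 2 :=
    (natDegree_hasseDeriv_le P d).trans_lt (by lia)
  rw [coeff_sub, taylor_coeff, eval_eq_sum_range' natDegree_lt]
  simp [Finset.sum_range_succ, hasseDeriv_coeff, add_comm 1 d, Nat.choose_succ_self_right]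

theorem natDegree_taylor_sub_self_le [Ring K] {P : K[X]} {d : ℕ} (hP : P.natDegree ≤ d + 1)
    (r : K) : (taylor r P - P).natDegree ≤ d := by
  refine natDegree_le_iff_coeff_eq_zero.mpr fun k hk => ?_
  rw [coeff_taylor_sub_self (by lia), coeff_eq_zero_of_natDegree_lt (by lia), mul_zero, zero_mul]

theorem eq_of_eventually_eval_natCast_eq [CommRing K] [IsDomain K] [CharZero K] {P G : K[X]}
    (h : ∀ᶠ n : ℕ in atTop, P.eval (n : K) = G.eval (n : K)) : P = G :=
  eq_of_infinite_eval_eq P G <|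
    ((Nat.frequently_atTop_iff_infinite.mp h.frequently).image Nat.cast_injective.injOn).mono
      (Set.image_subset_iff.mpr fun _ hn => hn)

theorem natDegree_and_factorial_mul_leadingCoeff_of_taylor_eq [CommRing K] [IsDomain K]
    [CharZero K] {P G : K[X]} {c : K} (hP : 2 ≤ P.natDegree)
    (hG : taylor 1 G = taylor 1 P - P + C c) :
    G.natDegree + 1 = P.natDegree ∧
      (G.natDegree.factorial : K) * G.leadingCoeff = P.natDegree.factorial * P.leadingCoeff := by
  obtain ⟨d, hd⟩ : ∃ d, P.natDegree = d + 2 := Nat.exists_eq_add_of_le' hP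
  have coeff_eq : (taylor 1 G).coeff (d + 1) = (d + 2) * P.leadingCoeff := by
    rw [hG, coeff_add, coeff_C_succ, coeff_taylor_sub_self hd.le, ← hd, coeff_natDegree]
    push_cast
    ring
  have natDegree_eq : G.natDegree = d + 1 := by
    rw [← natDegree_taylor G 1]
    refine natDegree_eq_of_le_of_coeff_ne_zero ?_ ?_
    · rw [hG, natDegree_add_C]
      exact natDegree_taylor_sub_self_le hd.le 1
    · have P_ne_zero : P ≠ 0 := ne_zero_of_natDegree_gt hP
      rw [coeff_eq]
      exact mul_ne_zero (by exact_mod_cast (d + 1).succ_ne_zero)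
        (leadingCoeff_ne_zero.mpr P_ne_zero)
  have leadingCoeff_eq : G.leadingCoeff = (d + 2) * P.leadingCoeff := by
    rw [← coeff_eq, ← natDegree_eq, coeff_taylor_natDegree]
  refine ⟨by rw [natDegree_eq, hd], ?_⟩
  rw [natDegree_eq, hd, leadingCoeff_eq, Nat.factorial_succ (d + 1)]
  push_cast
  ring

/-- `P` is the Hilbert polynomial of the length function `ℓ`: for all large `n` the value `ℓ n` is
finite and equal to `P(n)`. -/
def IsHilbertPolynomial (ℓ : ℕ → ℕ∞) (P : ℚ[X]) : Prop :=
  ∀ᶠ n : ℕ in atTop, ∃ len : ℕ, ℓ n = len ∧ (len : ℚ) = P.eval (n : ℚ)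

namespace IsHilbertPolynomial

variable {ℓ h : ℕ → ℕ∞} {P G : ℚ[X]}

theorem eventually_ne_top (hP : IsHilbertPolynomial ℓ P) : ∀ᶠ n in atTop, ℓ n ≠ ⊤ :=
  hP.mono fun _ ⟨_, hlen, _⟩ => hlen ▸ ENat.natCast_ne_top _

theorem taylor_eq {s : ℕ} (hP : IsHilbertPolynomial h P) (hG : IsHilbertPolynomial ℓ G)
    (hs : ∀ᶠ n in atTop, ℓ (n + 1) + h n = h (n + 1) + s) :
    taylor 1 G = taylor 1 P - P + C (s : ℚ) := by
  apply eq_of_eventually_eval_natCast_eq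
  filter_upwards [hP, (tendsto_add_atTop_nat 1).eventually hP,
    (tendsto_add_atTop_nat 1).eventually hG, hs]
    with n ⟨a, ha, haP⟩ ⟨b, hb, hbP⟩ ⟨g, hg, hgG⟩ sum_eq
  rw [ha, hb, hg] at sum_eq
  have sum_eq_rat : (g : ℚ) + a = b + s := by exact_mod_cast sum_eq
  push_cast at hbP hgG
  simp only [eval_add, eval_sub, taylor_eval, eval_C, ← haP, ← hbP, ← hgG]
  linarith

end IsHilbertPolynomial

end FirstDifference

theorem statement17_general {R M : Type*} [CommRing R] [IsNoetherianRing R]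
    [AddCommGroup M] [Module R M] [Module.Finite R M] {I Q : Ideal R}
    (hIQ : I • (⊤ : Submodule R M) = Q • ⊤) :
    (∀ᶠ n in atTop,
      Module.length R (((Q ^ (n + 1) • ⊤ : Submodule R M).colonBy I).map
          (Q ^ (n + 1) • ⊤ : Submodule R M).mkQ) =
        Module.length R ((Q ^ n • ⊤ : Submodule R M).map (Q ^ (n + 1) • ⊤ : Submodule R M).mkQ) +
          Module.length R ((⊥ : Submodule R M).colonBy I)) ∧
    ∀ P G : Polynomial ℚ, 2 ≤ P.natDegree →
      IsHilbertPolynomial (fun n => Module.length R (M ⧸ (Q ^ (n + 1) • ⊤ : Submodule R M))) P →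
      IsHilbertPolynomial (fun n => Module.length R
        (((Q ^ (n + 1) • ⊤ : Submodule R M).colonBy I).map
          (Q ^ (n + 1) • ⊤ : Submodule R M).mkQ)) G →
      G.natDegree + 1 = P.natDegree ∧
        (G.natDegree.factorial : ℚ) * G.leadingCoeff = P.natDegree.factorial * P.leadingCoeff := by
  have length_colon := eventually_length_colonBy_pow_smul_top hIQ
  refine ⟨length_colon, fun P G hdeg hP hG => ?_⟩
  obtain ⟨s, hs⟩ : ∃ s : ℕ, s = Module.length R ((⊥ : Submodule R M).colonBy I) := by
    obtain ⟨n, length_eq, length_ne_top⟩ := (length_colon.and hG.eventually_ne_top).exists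
    exact ENat.ne_top_iff_exists.mp (WithTop.add_ne_top.mp (length_eq ▸ length_ne_top)).2
  refine natDegree_and_factorial_mul_leadingCoeff_of_taylor_eq hdeg (hP.taylor_eq hG (s := s) ?_)
  filter_upwards [(tendsto_add_atTop_nat 1).eventually length_colon] with n length_eq
  rw [length_eq, hs, length_quotient_eq_add (pow_smul_top_le Q M (n + 1).le_succ)]
  exact add_right_comm _ _ _

/-- If `Q` is a parameter ideal of `M` (`dim M = t ≥ 1`) with `𝔪M = QM`, then eventually
`ℓ((Q^{n+1}M :_M 𝔪)/Q^{n+1}M) = ℓ(Q^n M/Q^{n+1}M) + ℓ(0 :_M 𝔪)`; in particular, when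
`t ≥ 2` the irreducible multiplicity `f⁰_Q(M)` equals the Hilbert multiplicity `e⁰_Q(M)`. -/
theorem statement17 {R M : Type*} [CommRing R] [IsNoetherianRing R] [IsLocalRing R]
    [AddCommGroup M] [Module R M] [Module.Finite R M]
    (t : ℕ) (ht : 1 ≤ t)
    (hdim : ringKrullDim (R ⧸ Module.annihilator R M) = t)
    (Q : Ideal R) (hQpar : IsParameterIdeal R M t Q)
    (hmQ : (maximalIdeal R) • (⊤ : Submodule R M) = Q • ⊤) :
    (∃ N : ℕ, ∀ n ≥ N,
      moduleLength R ↥(Submodule.map (Q ^ (n + 1) • ⊤ : Submodule R M).mkQ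
          ((Q ^ (n + 1) • ⊤ : Submodule R M).colonBy (maximalIdeal R)))
        = moduleLength R ↥(Submodule.map (Q ^ (n + 1) • ⊤ : Submodule R M).mkQ
            (Q ^ n • ⊤ : Submodule R M))
          + moduleLength R ↥((⊥ : Submodule R M).colonBy (maximalIdeal R))) ∧
    (2 ≤ t → ∀ P G : Polynomial ℚ, P.natDegree = t → G.natDegree = t - 1 →
      (∃ N : ℕ, ∀ n ≥ N, ∃ len : ℕ,
        moduleLength R (M ⧸ (Q ^ (n + 1) • ⊤ : Submodule R M)) = len ∧
          (len : ℚ) = P.eval (n : ℚ)) →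
      (∃ N : ℕ, ∀ n ≥ N, ∃ len : ℕ,
        moduleLength R ↥(Submodule.map (Q ^ (n + 1) • ⊤ : Submodule R M).mkQ
          ((Q ^ (n + 1) • ⊤ : Submodule R M).colonBy (maximalIdeal R))) = len ∧
          (len : ℚ) = G.eval (n : ℚ)) →
      ((t - 1).factorial : ℚ) * G.leadingCoeff = (t.factorial : ℚ) * P.leadingCoeff) := by
  simp only [moduleLength_eq_length, ← eventually_atTop]
  refine (statement17_general hmQ).imp id fun multiplicity ht2 P G hPt hGt hP hG => ?_
  simpa only [hPt, hGt] using (multiplicity P G (hPt ▸ ht2) hP hG).2
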